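/- For n ≥ 2, let φ : (ℤ/2)[GL_{n-1}(ℤ/2)] → (ℤ/2)[GL_n(ℤ/2)] be the algebra map induced by the block-diagonal group embedding g ↦ g ⊕ 1 (g placed in the upper-left (n-1)×(n-1) block, with 1 in the (n,n) entry). Then φ(e_{n-1}) * e_n = e_n in (ℤ/2)[GL_n(ℤ/2)]. -/

import Mathlib

open MonoidAlgebra
open scoped Classical

/-- The sum of all permutation matrices in the group algebra `(ℤ/2)[GL_n(ℤ/2)]`. -/
noncomputable def SigmaBar (n : ℕ) : MonoidAlgebra (ZMod 2) (GL (Fin n) (ZMod 2)) :=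
  ∑ g : GL (Fin n) (ZMod 2),
    if ∃ σ : Equiv.Perm (Fin n),
        (g : Matrix (Fin n) (Fin n) (ZMod 2)) = σ.permMatrix (ZMod 2)
    then MonoidAlgebra.single g 1 else 0

/-- The sum of all invertible upper-triangular matrices in `(ℤ/2)[GL_n(ℤ/2)]`. -/
noncomputable def BBar (n : ℕ) : MonoidAlgebra (ZMod 2) (GL (Fin n) (ZMod 2)) :=
  ∑ g : GL (Fin n) (ZMod 2),
    if Matrix.BlockTriangular (g : Matrix (Fin n) (Fin n) (ZMod 2)) id
    then MonoidAlgebra.single g 1 else 0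

/-- The mod 2 Steinberg element `e_n = Σ̄_n ⬝ B̄_n`. -/
noncomputable def SteinbergElement (n : ℕ) : MonoidAlgebra (ZMod 2) (GL (Fin n) (ZMod 2)) :=
  SigmaBar n * BBar n

/-- `M ↦ M ⊕ 1` (block diagonal) as a multiplicative monoid homomorphism of matrix rings. -/
def blockDiagHom (m : ℕ) :
    Matrix (Fin m) (Fin m) (ZMod 2) →*
      Matrix (Fin m ⊕ Fin 1) (Fin m ⊕ Fin 1) (ZMod 2) where
  toFun M := Matrix.fromBlocks M 0 0 1
  map_one' := Matrix.fromBlocks_one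
  map_mul' A B := by
    rw [Matrix.fromBlocks_multiply]
    simp

/-- The block-diagonal group embedding `GL_{n-1}(ℤ/2) → GL_n(ℤ/2)`, `g ↦ g ⊕ 1`,
with `g` in the upper-left `(n-1)×(n-1)` block and `1` in the `(n,n)` entry. -/
noncomputable def glEmbed (n : ℕ) (hn : 2 ≤ n) :
    GL (Fin (n - 1)) (ZMod 2) →* GL (Fin n) (ZMod 2) :=
  Units.map
    (((Matrix.reindexAlgEquiv (ZMod 2) (ZMod 2)
          ((finSumFinEquiv (m := n - 1) (n := 1)).trans
            (finCongr (by omega)))).toAlgHom.toRingHom.toMonoidHom).comp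
      (blockDiagHom (n - 1)))

/-!
Write `w` for the reversal permutation matrix, `B` for `B̄_n`, `Σ` for `Σ̄_n` and `L` for the sum of
the invertible lower triangular matrices. If `a x = a` and `x z = z` for an element `x` of order
`2`, then `z` is divisible by `1 + x` on the left and `a (1 + x) = 0`, so `a z = 0`. This kills
`B τ B` for every permutation `τ ≠ w`, hence `Σ B Σ B = Σ B w B = Σ w L B = Σ L B`. In `Σ L B`
everything but the contribution of the identity vanishes or cancels in pairs, so `e_n = Σ B` is
idempotent. Moreover `e_n = φ(e_{n-1}) y` for some `y`, because `ρ B̄_n` is invariant under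
`φ(B_{n-1})` when `ρ` is the representative of a coset of `S_{n-1}` in `S_n` whose inverse is
increasing on the first `n - 1` letters. Idempotence of `e_{n-1}` then gives the absorption
identity.
-/

section GroupAlgebra

variable {R G K : Type*} [Semiring R] [Group G] [Group K] [Fintype K]

/-- The sum in `R[G]` of the images `ψ k`, `k ∈ K`. The sums over `B_n` and over the permutation
matrices, and their images under block embeddings, are all of this form. -/
noncomputable def homSum (R : Type*) [Semiring R] (ψ : K →* G) : MonoidAlgebra R G :=
  ∑ k, of R G (ψ k)

lemma homSum_eq_sum_ite [Fintype G] {ψ : K →* G} (hψ : Function.Injective ψ) {p : G → Prop}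
    [DecidablePred p] (hp : ∀ g, p g ↔ g ∈ ψ.range) :
    homSum R ψ = ∑ g, if p g then of R G g else 0 := by
  rw [← Finset.sum_filter]
  refine Finset.sum_bij (fun k _ => ψ k) (fun k _ => by simp [hp]) (fun k _ k' _ h => hψ h) ?_
    fun k _ => rfl
  intro g hg
  obtain ⟨k, rfl⟩ := (hp g).1 (Finset.mem_filter.1 hg).2
  exact ⟨k, Finset.mem_univ k, rfl⟩

lemma mapDomainAlgHom_homSum {R H : Type*} [CommSemiring R] [Group H] (φ : G →* H) (ψ : K →* G) :
    mapDomainAlgHom R R φ (homSum R ψ) = homSum R (φ.comp ψ) := by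
  simp only [homSum, map_sum]
  exact Finset.sum_congr rfl fun k _ => mapDomain_single

lemma of_mul_homSum (ψ : K →* G) (k : K) : of R G (ψ k) * homSum R ψ = homSum R ψ := by
  simp only [homSum, Finset.mul_sum, ← map_mul]
  exact Equiv.sum_comp (Equiv.mulLeft k) fun k' => of R G (ψ k')

lemma homSum_mul_of (ψ : K →* G) (k : K) : homSum R ψ * of R G (ψ k) = homSum R ψ := by
  simp only [homSum, Finset.sum_mul, ← map_mul]
  exact Equiv.sum_comp (Equiv.mulRight k) fun k' => of R G (ψ k')

lemma mul_homSum_of_forall_mul_of_eq (ψ : K →* G) {a : MonoidAlgebra R G}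
    (ha : ∀ k, a * of R G (ψ k) = a) : a * homSum R ψ = Fintype.card K • a := by
  simp only [homSum, Finset.mul_sum, ha, Finset.sum_const, Finset.card_univ]

-- `R[G]` is free over `R[K]` on representatives of the right cosets of `K`; restricting `z` to
-- such a set of representatives gives the cofactor.
lemma exists_eq_homSum_mul {ψ : K →* G} (hψ : Function.Injective ψ) {z : MonoidAlgebra R G}
    (hz : ∀ k, of R G (ψ k) * z = z) : ∃ y, z = homSum R ψ * y := by
  obtain ⟨Q, hQ, -⟩ := ψ.range.exists_isComplement_right 1
  refine ⟨ofCoeff (z.coeff.filter (· ∈ Q)), ?_⟩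
  have hz_apply (k : K) (g : G) : z.coeff ((ψ k)⁻¹ * g) = z.coeff g := by
    conv_rhs => rw [← hz k]
    simp [of_apply]
  ext g
  obtain ⟨⟨⟨_, k₀, rfl⟩, q⟩, rfl : ψ k₀ * q = g⟩ := hQ.2 g
  simp only [homSum, Finset.sum_mul, coeff_sum, Finsupp.finsetSum_apply, of_apply,
    coeff_single_mul_apply, one_mul]
  rw [Finset.sum_eq_single_of_mem k₀ (Finset.mem_univ _)]
  · rw [inv_mul_cancel_left, Finsupp.filter_apply_pos _ _ q.2, ← hz_apply k₀, inv_mul_cancel_left]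
  · intro k _ hk
    refine Finsupp.filter_apply_neg _ _ fun hmem => hk ?_
    have heq := @hQ.1 (⟨ψ k, k, rfl⟩, ⟨_, hmem⟩) (⟨ψ k₀, k₀, rfl⟩, q) (mul_inv_cancel_left _ _)
    exact hψ (congrArg (fun p => (p.1 : G)) heq)

lemma mul_eq_zero_of_mul_of_eq_of_of_mul_eq {x : G} (hx : IsOfFinOrder x)
    (hx0 : (orderOf x : R) = 0) {a z : MonoidAlgebra R G} (ha : a * of R G x = a)
    (hz : of R G x * z = z) : a * z = 0 := by
  have : Fintype (Subgroup.zpowers x) := (finite_zpowers.2 hx).fintype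
  have ha_pow (m : ℕ) : a * of R G (x ^ m) = a := by
    induction m with
    | zero => rw [pow_zero, map_one, mul_one]
    | succ m ih => rw [pow_succ', map_mul, ← mul_assoc, ha, ih]
  have hz_pow (m : ℕ) : of R G (x ^ m) * z = z := by
    induction m with
    | zero => rw [pow_zero, map_one, one_mul]
    | succ m ih => rw [pow_succ, map_mul, mul_assoc, hz, ih]
  have exists_pow (k : Subgroup.zpowers x) : ∃ m : ℕ, x ^ m = k :=
    hx.mem_powers_iff_mem_zpowers.2 k.2
  have ha_zpowers (k : Subgroup.zpowers x) : a * of R G ((Subgroup.zpowers x).subtype k) = a := by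
    obtain ⟨m, hm⟩ := exists_pow k
    rw [Subgroup.subtype_apply, ← hm, ha_pow]
  have hz_zpowers (k : Subgroup.zpowers x) : of R G ((Subgroup.zpowers x).subtype k) * z = z := by
    obtain ⟨m, hm⟩ := exists_pow k
    rw [Subgroup.subtype_apply, ← hm, hz_pow]
  obtain ⟨y, rfl⟩ := exists_eq_homSum_mul (Subgroup.subtype_injective _) hz_zpowers
  rw [← mul_assoc, mul_homSum_of_forall_mul_of_eq _ ha_zpowers, ← Nat.card_eq_fintype_card,
    Nat.card_zpowers, ← Nat.cast_smul_eq_nsmul R, hx0, zero_smul, zero_mul]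

lemma mul_eq_zero_of_mul_self_eq_one [CharP R 2] {x : G} (hx : x * x = 1) (hx1 : x ≠ 1)
    {a z : MonoidAlgebra R G} (ha : a * of R G x = a) (hz : of R G x * z = z) : a * z = 0 := by
  have hx_order : orderOf x = 2 := orderOf_eq_prime (by rw [pow_two, hx]) hx1
  refine mul_eq_zero_of_mul_of_eq_of_of_mul_eq ?_ ?_ ha hz
  · rw [← orderOf_pos_iff, hx_order]
    exact two_pos
  · rw [hx_order, CharP.cast_eq_zero]

end GroupAlgebra

section Matrices

variable {ι R : Type*} [Fintype ι] [DecidableEq ι] [CommRing R]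

/-- Permutation matrices as a homomorphism into `GL ι R`; the entry at `(i, j)` is `1` exactly
when `i = σ j`, so that this is multiplicative rather than antimultiplicative in `σ`. -/
def permGL (R : Type*) [CommRing R] : Equiv.Perm ι →* GL ι R :=
  Matrix.permMatrixHom.toHomUnits

lemma permGL_mul_apply (σ : Equiv.Perm ι) (g : GL ι R) (i j : ι) :
    (permGL R σ * g) i j = g (σ⁻¹ i) j := by
  change (σ⁻¹.permMatrix R * g.1) i j = _
  rw [Equiv.Perm.permMatrix, PEquiv.toMatrix_toPEquiv_mul, Matrix.submatrix_apply, id]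

lemma mul_permGL_apply (σ : Equiv.Perm ι) (g : GL ι R) (i j : ι) :
    (g * permGL R σ) i j = g i (σ j) := by
  change (g.1 * σ⁻¹.permMatrix R) i j = _
  rw [Equiv.Perm.permMatrix, PEquiv.mul_toMatrix_toPEquiv, Matrix.submatrix_apply, id,
    Equiv.Perm.inv_def, Equiv.symm_symm]

lemma permGL_apply (σ : Equiv.Perm ι) (i j : ι) : permGL R σ i j = if i = σ j then 1 else 0 := by
  simpa [Matrix.one_apply] using mul_permGL_apply σ (1 : GL ι R) i j

lemma permGL_injective [Nontrivial R] : Function.Injective (permGL R : Equiv.Perm ι →* GL ι R) := by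
  intro σ τ hστ
  refine Equiv.ext fun j => ?_
  have h := permGL_apply (R := R) τ (σ j) j
  rw [← hστ, permGL_apply, if_pos rfl] at h
  by_contra hne
  rw [if_neg hne] at h
  exact one_ne_zero h

/-- The unipotent matrix `1 + e_k v` (`e_k` a column, `v` a row): right multiplication adds `v j`
times column `k` to each column `j`. -/
def transvectionGL (k : ι) (v : ι → R) (hv : v k = 0) : GL ι R :=
  have hsq : Matrix.vecMulVec (Pi.single k 1) v * Matrix.vecMulVec (Pi.single k 1) v = 0 := by
    simp [Matrix.vecMulVec_mul_vecMulVec, hv]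
  ⟨1 + Matrix.vecMulVec (Pi.single k 1) v, 1 - Matrix.vecMulVec (Pi.single k 1) v,
    by rw [add_mul, mul_sub, mul_sub, hsq]; simp, by rw [sub_mul, mul_add, mul_add, hsq]; simp⟩

lemma mul_transvectionGL_apply (g : GL ι R) {k : ι} {v : ι → R} (hv : v k = 0) (i j : ι) :
    (g * transvectionGL k v hv) i j = g i j + g i k * v j := by
  change (g.1 * (1 + Matrix.vecMulVec (Pi.single k 1) v)) i j = _
  rw [mul_add, mul_one, Matrix.mul_vecMulVec, Matrix.mulVec_single_one]
  rfl

lemma transvectionGL_apply {k : ι} {v : ι → R} (hv : v k = 0) (i j : ι) :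
    transvectionGL k v hv i j = (1 : GL ι R) i j + (1 : GL ι R) i k * v j := by
  rw [← mul_transvectionGL_apply, one_mul]

lemma transvectionGL_mul_self [CharP R 2] {k : ι} {v : ι → R} (hv : v k = 0) :
    transvectionGL k v hv * transvectionGL k v hv = 1 := by
  refine Units.ext (Matrix.ext fun i j => ?_)
  rw [mul_transvectionGL_apply, transvectionGL_apply, transvectionGL_apply, hv, mul_zero, add_zero,
    add_assoc, CharTwo.add_self_eq_zero, add_zero]

lemma transvectionGL_ne_one {k : ι} {v : ι → R} (hv : v k = 0) (hv0 : v ≠ 0) :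
    transvectionGL k v hv ≠ 1 := by
  intro h
  refine hv0 (funext fun j => ?_)
  simpa [h] using transvectionGL_apply hv k j

lemma transvectionGL_mul_permGL (τ : Equiv.Perm ι) {k : ι} {v : ι → R} (hv : v k = 0)
    (hv' : (v ∘ τ.symm) (τ k) = 0) :
    transvectionGL (τ k) (v ∘ τ.symm) hv' * permGL R τ = permGL R τ * transvectionGL k v hv := by
  refine Units.ext (Matrix.ext fun i j => ?_)
  rw [mul_permGL_apply, permGL_mul_apply, transvectionGL_apply, transvectionGL_apply]
  simp [Matrix.one_apply, Equiv.Perm.inv_def, Equiv.symm_apply_eq]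

/-- The subgroup of block triangular matrices in `GL ι R` for the order of indices given by `b`:
the upper triangular group for `b = id`, the lower triangular one for `b = toDual`. -/
def triangularSubgroup {α : Type*} [LinearOrder α] (R : Type*) [CommRing R] (b : ι → α) :
    Subgroup (GL ι R) where
  carrier := {g | Matrix.BlockTriangular g.1 b}
  one_mem' := Matrix.blockTriangular_one
  mul_mem' hg hh := hg.mul hh
  inv_mem' {g} hg := by
    have := g.invertible
    simpa using Matrix.blockTriangular_inv_of_blockTriangular (M := g.1) hg

/-- The group `B_n` of invertible upper triangular matrices. -/
abbrev upperTriangular (n : ℕ) (R : Type*) [CommRing R] : Subgroup (GL (Fin n) R) :=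
  triangularSubgroup R id

/-- The group of invertible lower triangular matrices, opposite to `B_n`. -/
abbrev lowerTriangular (n : ℕ) (R : Type*) [CommRing R] : Subgroup (GL (Fin n) R) :=
  triangularSubgroup R OrderDual.toDual

variable {n : ℕ}

lemma mem_upperTriangular {g : GL (Fin n) R} :
    g ∈ upperTriangular n R ↔ ∀ i j, j < i → g i j = 0 := Iff.rfl

lemma mem_lowerTriangular {g : GL (Fin n) R} :
    g ∈ lowerTriangular n R ↔ ∀ i j, i < j → g i j = 0 := Iff.rfl

lemma apply_self_of_mem_lowerTriangular {g : GL (Fin n) (ZMod 2)}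
    (hg : g ∈ lowerTriangular n (ZMod 2)) (i : Fin n) : g i i = 1 := by
  have hdet : ∏ i, g i i ≠ 0 := by
    rw [← Matrix.det_of_isLowerTriangular _ hg]
    exact g.det_ne_zero
  exact Fin.eq_one_of_ne_zero _ (Finset.prod_ne_zero_iff.1 hdet i (Finset.mem_univ i))

lemma conj_revPerm_mem_lowerTriangular_iff {g : GL (Fin n) R} :
    (permGL R Fin.revPerm)⁻¹ * g * permGL R Fin.revPerm ∈ lowerTriangular n R ↔
      g ∈ upperTriangular n R := by
  rw [mem_lowerTriangular, mem_upperTriangular, ← map_inv]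
  simp only [mul_permGL_apply, permGL_mul_apply]
  exact Fin.revPerm.forall_congr fun i => Fin.revPerm.forall_congr fun j => by simp

lemma transvectionGL_mem_upperTriangular {k : Fin n} {v : Fin n → R} (hv : v k = 0)
    (hkv : ∀ j, v j ≠ 0 → k < j) : transvectionGL k v hv ∈ upperTriangular n R := by
  rw [mem_upperTriangular]
  intro i j hji
  rw [transvectionGL_apply]
  by_cases hvj : v j = 0
  · simp [hvj, hji.ne']
  · simp [hji.ne', ((hkv j hvj).trans hji).ne']

end Matrices

section GroupSums

variable {n : ℕ}

lemma SigmaBar_eq_homSum (n : ℕ) : SigmaBar n = homSum (ZMod 2) (permGL (ZMod 2)) := by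
  refine (homSum_eq_sum_ite (permGL_injective) fun g => ⟨?_, ?_⟩).symm
  · rintro ⟨σ, hσ⟩
    exact ⟨σ⁻¹, Units.ext (by rw [hσ, ← inv_inv σ]; rfl)⟩
  · rintro ⟨σ, rfl⟩
    exact ⟨σ⁻¹, rfl⟩

lemma BBar_eq_homSum (n : ℕ) : BBar n = homSum (ZMod 2) (upperTriangular n (ZMod 2)).subtype :=
  (homSum_eq_sum_ite (Subgroup.subtype_injective _) fun _ => by
    rw [Subgroup.range_subtype]; rfl).symm

lemma SigmaBar_mul_of_permGL (σ : Equiv.Perm (Fin n)) :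
    SigmaBar n * of _ _ (permGL (ZMod 2) σ) = SigmaBar n := by
  rw [SigmaBar_eq_homSum, homSum_mul_of]

lemma of_mul_BBar {u : GL (Fin n) (ZMod 2)} (hu : u ∈ upperTriangular n (ZMod 2)) :
    of _ _ u * BBar n = BBar n := by
  rw [BBar_eq_homSum]
  exact of_mul_homSum (upperTriangular n (ZMod 2)).subtype ⟨u, hu⟩

lemma BBar_mul_of {u : GL (Fin n) (ZMod 2)} (hu : u ∈ upperTriangular n (ZMod 2)) :
    BBar n * of _ _ u = BBar n := by
  rw [BBar_eq_homSum]
  exact homSum_mul_of (upperTriangular n (ZMod 2)).subtype ⟨u, hu⟩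

lemma exists_lt_apply_lt_of_ne_revPerm {τ : Equiv.Perm (Fin n)} (hτ : τ ≠ Fin.revPerm) :
    ∃ i j, i < j ∧ τ i < τ j := by
  by_contra! hanti
  have hmono : StrictMono (τ ∘ Fin.rev) := fun i j hij =>
    (hanti _ _ (Fin.rev_lt_rev.2 hij)).lt_of_ne fun h =>
      hij.ne (Fin.rev_injective (τ.injective h))
  have hid : τ ∘ Fin.rev = id := by
    rw [← hmono.range_inj strictMono_id, (τ.surjective.comp Fin.rev_surjective).range_eq,
      Set.range_id]
  refine hτ (Equiv.ext fun i => ?_)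
  simpa using congrFun hid i.rev

lemma BBar_mul_of_permGL_mul_BBar_eq_zero {τ : Equiv.Perm (Fin n)} (hτ : τ ≠ Fin.revPerm) :
    BBar n * (of _ _ (permGL (ZMod 2) τ) * BBar n) = 0 := by
  obtain ⟨i, j, hij, hτij⟩ := exists_lt_apply_lt_of_ne_revPerm hτ
  set v : Fin n → ZMod 2 := Pi.single j 1
  have hvi : v i = 0 := Pi.single_eq_of_ne hij.ne _
  have eq_of_ne_zero {b : Fin n} (hb : v b ≠ 0) : b = j := by
    by_contra hbj
    exact hb (Pi.single_eq_of_ne hbj _)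
  have hx : transvectionGL i v hvi ∈ upperTriangular n (ZMod 2) :=
    transvectionGL_mem_upperTriangular hvi fun b hb => eq_of_ne_zero hb ▸ hij
  have hvτ : (v ∘ τ.symm) (τ i) = 0 := by simpa using hvi
  have hx' : transvectionGL (τ i) (v ∘ τ.symm) hvτ ∈ upperTriangular n (ZMod 2) :=
    transvectionGL_mem_upperTriangular hvτ fun b hb => by
      rwa [τ.symm_apply_eq.1 (eq_of_ne_zero hb)]
  refine mul_eq_zero_of_mul_self_eq_one (transvectionGL_mul_self hvτ)
    (transvectionGL_ne_one hvτ fun h => ?_) (BBar_mul_of hx') ?_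
  · simpa [v] using congrFun h (τ j)
  · rw [← mul_assoc, ← map_mul, transvectionGL_mul_permGL _ hvi, map_mul, mul_assoc, of_mul_BBar hx]

end GroupSums

section LowerTriangular

variable {n : ℕ} {l : GL (Fin n) (ZMod 2)} {m k : Fin n}

/-- `(m, k)` is the position of the first nonzero entry of `l` below the diagonal, reading row by
row. -/
def IsPivot (l : GL (Fin n) (ZMod 2)) (m k : Fin n) : Prop :=
  IsLeast {p : Fin n ×ₗ Fin n | (ofLex p).2 < (ofLex p).1 ∧ l (ofLex p).1 (ofLex p).2 ≠ 0}
    (toLex (m, k))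

lemma exists_isPivot (hl : l ∈ lowerTriangular n (ZMod 2)) (hl1 : l ≠ 1) :
    ∃ m k, IsPivot l m k := by
  set S := {p : Fin n ×ₗ Fin n | (ofLex p).2 < (ofLex p).1 ∧ l (ofLex p).1 (ofLex p).2 ≠ 0}
  have hS : S.Nonempty := by
    by_contra hS_empty
    refine hl1 (Units.ext (Matrix.ext fun i j => ?_))
    rcases lt_trichotomy i j with hij | rfl | hji
    · rw [hl hij, Units.val_one, Matrix.one_apply_ne hij.ne]
    · rw [apply_self_of_mem_lowerTriangular hl, Units.val_one, Matrix.one_apply_eq]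
    · rw [Units.val_one, Matrix.one_apply_ne hji.ne']
      by_contra hne
      exact hS_empty ⟨toLex (i, j), hji, hne⟩
  obtain ⟨p, hp⟩ := S.toFinite.exists_minimal hS
  exact ⟨(ofLex p).1, (ofLex p).2, hp.1, fun q hq =>
    le_of_not_gt fun hlt => hlt.not_ge (hp.2 hq hlt.le)⟩

lemma IsPivot.lt (h : IsPivot l m k) : k < m := h.1.1

lemma IsPivot.apply_eq_one (h : IsPivot l m k) : l m k = 1 := Fin.eq_one_of_ne_zero _ h.1.2

lemma IsPivot.ne_one (h : IsPivot l m k) : l ≠ 1 := by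
  rintro rfl
  exact h.1.2 (Matrix.one_apply_ne h.lt.ne')

lemma IsPivot.unique {m' k' : Fin n} (h : IsPivot l m k) (h' : IsPivot l m' k') :
    m = m' ∧ k = k' :=
  Prod.ext_iff.1 (toLex_inj.1 (IsLeast.unique h h'))

lemma IsPivot.apply_eq_zero (h : IsPivot l m k) {i j : Fin n} (hji : j < i)
    (hlt : toLex (i, j) < toLex (m, k)) : l i j = 0 := by
  by_contra hne
  exact hlt.not_ge (h.2 ⟨hji, hne⟩)

lemma IsPivot.apply_of_lt (h : IsPivot l m k) (hl : l ∈ lowerTriangular n (ZMod 2))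
    {i : Fin n} (hi : i < m)
    (j : Fin n) : l i j = if i = j then 1 else 0 := by
  split_ifs with hij
  · rw [← hij, apply_self_of_mem_lowerTriangular hl]
  · rcases lt_or_gt_of_ne hij with hij | hji
    · exact hl hij
    · exact h.apply_eq_zero hji (Prod.Lex.toLex_lt_toLex.2 (.inl hi))

/-- Row `m` of `l` with its entry in column `k` replaced by `0`. -/
def punctured (l : GL (Fin n) (ZMod 2)) (m k : Fin n) : Fin n → ZMod 2 :=
  Function.update (l.1 m) k 0

lemma punctured_self (l : GL (Fin n) (ZMod 2)) (m k : Fin n) : punctured l m k k = 0 :=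
  Function.update_self ..

/-- The matrix obtained from `l` by exchanging rows `k` and `m` and then clearing row `k` outside
the diagonal, by adding column `k` to other columns. For `l` lower triangular with pivot `(m, k)`
this is an involution preserving the pivot, the row and the column operations being absorbed by
`Σ̄_n` and `B̄_n`. -/
def pivotMove (l : GL (Fin n) (ZMod 2)) (m k : Fin n) : GL (Fin n) (ZMod 2) :=
  permGL (ZMod 2) (Equiv.swap k m) * l *
    transvectionGL k (punctured l m k) (punctured_self l m k)

lemma pivotMove_apply (l : GL (Fin n) (ZMod 2)) (m k i j : Fin n) :
    pivotMove l m k i j =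
      l (Equiv.swap k m i) j + l (Equiv.swap k m i) k * punctured l m k j := by
  rw [pivotMove, mul_transvectionGL_apply, permGL_mul_apply, permGL_mul_apply, Equiv.swap_inv]

lemma IsPivot.pivotMove_apply_of_le (h : IsPivot l m k) (hl : l ∈ lowerTriangular n (ZMod 2))
    {i : Fin n} (hi : i ≤ m) (j : Fin n) : pivotMove l m k i j = l i j := by
  have hk_row := h.apply_of_lt hl h.lt
  rw [pivotMove_apply]
  rcases hi.lt_or_eq with him | rfl
  · by_cases hik : i = k
    · subst hik
      rw [Equiv.swap_apply_left, h.apply_eq_one, one_mul, hk_row, punctured]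
      by_cases hij : i = j
      · rw [← hij, h.apply_eq_one, Function.update_self, add_zero, if_pos rfl]
      · rw [Function.update_of_ne (Ne.symm hij), CharTwo.add_self_eq_zero, if_neg hij]
    · rw [Equiv.swap_apply_of_ne_of_ne hik him.ne, h.apply_of_lt hl him k, if_neg hik, zero_mul,
        add_zero]
  · rw [Equiv.swap_apply_right, hk_row, hk_row, if_pos rfl, one_mul, punctured]
    by_cases hkj : k = j
    · rw [← hkj, h.apply_eq_one, Function.update_self, add_zero, if_pos rfl]
    · rw [Function.update_of_ne (Ne.symm hkj), if_neg hkj, zero_add]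

lemma IsPivot.pivotMove_mem_lowerTriangular (h : IsPivot l m k)
    (hl : l ∈ lowerTriangular n (ZMod 2)) :
    pivotMove l m k ∈ lowerTriangular n (ZMod 2) := by
  rw [mem_lowerTriangular]
  intro i j hij
  rcases le_or_gt i m with him | hmi
  · rw [h.pivotMove_apply_of_le hl him, hl hij]
  · have hki := h.lt.trans hmi
    rw [pivotMove_apply, Equiv.swap_apply_of_ne_of_ne hki.ne' hmi.ne', hl hij, punctured,
      Function.update_of_ne (hki.trans hij).ne', hl (hmi.trans hij), mul_zero, add_zero]

lemma IsPivot.isPivot_pivotMove (h : IsPivot l m k) (hl : l ∈ lowerTriangular n (ZMod 2)) :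
    IsPivot (pivotMove l m k) m k := by
  refine ⟨⟨h.lt, ?_⟩, fun p hp => ?_⟩
  · exact (h.pivotMove_apply_of_le hl le_rfl k).trans_ne h.1.2
  · rcases le_or_gt (ofLex p).1 m with hpm | hmp
    · exact h.2 ⟨hp.1, (h.pivotMove_apply_of_le hl hpm _).symm.trans_ne hp.2⟩
    · exact (Prod.Lex.toLex_lt_toLex.2 (.inl hmp)).le

lemma IsPivot.pivotMove_pivotMove (h : IsPivot l m k) (hl : l ∈ lowerTriangular n (ZMod 2)) :
    pivotMove (pivotMove l m k) m k = l := by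
  have hv : punctured (pivotMove l m k) m k = punctured l m k :=
    congrArg (Function.update · k 0) (funext (h.pivotMove_apply_of_le hl le_rfl))
  rw [pivotMove]
  simp only [hv]
  change _ * (_ * l * transvectionGL k _ (punctured_self l m k)) * _ = l
  rw [← mul_assoc, mul_assoc _ (transvectionGL ..), transvectionGL_mul_self, mul_one,
    ← mul_assoc, ← map_mul, Equiv.swap_mul_self, map_one, one_mul]

lemma IsPivot.of_pivotMove_mul_BBar (h : IsPivot l m k) :
    of _ _ (pivotMove l m k) * BBar n =
      of _ _ (permGL (ZMod 2) (Equiv.swap k m)) * (of _ _ l * BBar n) := by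
  rw [pivotMove, map_mul, map_mul, mul_assoc, of_mul_BBar, mul_assoc]
  refine transvectionGL_mem_upperTriangular _ fun j hj => ?_
  by_contra! hjk
  rcases hjk.lt_or_eq with hjk | rfl
  · refine hj ((Function.update_of_ne hjk.ne ..).trans ?_)
    exact h.apply_eq_zero (hjk.trans h.lt) (Prod.Lex.toLex_lt_toLex.2 (.inr ⟨rfl, hjk⟩))
  · exact hj (punctured_self l m j)

lemma IsPivot.SigmaBar_mul_of_pivotMove_mul_BBar (h : IsPivot l m k) :
    SigmaBar n * (of _ _ (pivotMove l m k) * BBar n) = SigmaBar n * (of _ _ l * BBar n) := by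
  rw [h.of_pivotMove_mul_BBar, ← mul_assoc, SigmaBar_mul_of_permGL]

lemma IsPivot.SigmaBar_mul_of_mul_BBar_eq_zero (h : IsPivot l m k) (hfix : pivotMove l m k = l) :
    SigmaBar n * (of _ _ l * BBar n) = 0 := by
  have hswap : permGL (ZMod 2) (Equiv.swap k m) ≠ 1 := fun h1 =>
    h.lt.ne (Equiv.swap_eq_one_iff.1 (permGL_injective (h1.trans (map_one _).symm)))
  refine mul_eq_zero_of_mul_self_eq_one ?_ hswap (SigmaBar_mul_of_permGL _) ?_
  · rw [← map_mul, Equiv.swap_mul_self, map_one]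
  · rw [← h.of_pivotMove_mul_BBar, hfix]

lemma sum_erase_one_SigmaBar_mul_of_mul_BBar_eq_zero (n : ℕ) :
    ∑ l ∈ (Finset.univ : Finset (lowerTriangular n (ZMod 2))).erase 1,
      SigmaBar n * (of _ _ l.1 * BBar n) = 0 := by
  have hpivot (l : lowerTriangular n (ZMod 2)) (hl : l ∈ Finset.univ.erase 1) :
      ∃ m k, IsPivot l.1 m k :=
    exists_isPivot l.2 fun h1 => Finset.ne_of_mem_erase hl (Subtype.ext h1)
  choose m k hmk using hpivot
  let move (l : lowerTriangular n (ZMod 2)) (hl : l ∈ Finset.univ.erase 1) :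
      lowerTriangular n (ZMod 2) :=
    ⟨pivotMove l (m l hl) (k l hl), (hmk l hl).pivotMove_mem_lowerTriangular l.2⟩
  have hmove (l hl) : IsPivot (move l hl).1 (m l hl) (k l hl) := (hmk l hl).isPivot_pivotMove l.2
  have hmove_mem (l hl) : move l hl ∈ Finset.univ.erase 1 :=
    Finset.mem_erase.2 ⟨fun h1 => (hmove l hl).ne_one (congrArg Subtype.val h1), Finset.mem_univ _⟩
  refine Finset.sum_involution move (fun l hl => ?_) (fun l hl hfl hfix => ?_) hmove_mem
    fun l hl => ?_
  · simp only [move]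
    rw [(hmk l hl).SigmaBar_mul_of_pivotMove_mul_BBar, ZModModule.add_self]
  · exact hfl ((hmk l hl).SigmaBar_mul_of_mul_BBar_eq_zero (congrArg Subtype.val hfix))
  · obtain ⟨hm, hk⟩ := (hmk _ (hmove_mem l hl)).unique (hmove l hl)
    refine Subtype.ext (Eq.trans ?_ ((hmk l hl).pivotMove_pivotMove l.2))
    exact congrArg₂ (pivotMove (move l hl).1) hm hk

lemma SigmaBar_mul_homSum_lowerTriangular_mul_BBar (n : ℕ) :
    SigmaBar n * (homSum (ZMod 2) (lowerTriangular n (ZMod 2)).subtype * BBar n) =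
      SigmaBar n * BBar n := by
  rw [homSum, Finset.sum_mul, Finset.mul_sum, ← Finset.add_sum_erase _ _ (Finset.mem_univ 1)]
  simp only [Subgroup.subtype_apply]
  rw [sum_erase_one_SigmaBar_mul_of_mul_BBar_eq_zero, Subgroup.coe_one, map_one, one_mul, add_zero]

end LowerTriangular

section Idempotence

lemma BBar_mul_SigmaBar_mul_BBar (n : ℕ) :
    BBar n * (SigmaBar n * BBar n) = BBar n * (of _ _ (permGL (ZMod 2) Fin.revPerm) * BBar n) := by
  rw [SigmaBar_eq_homSum, homSum, Finset.sum_mul, Finset.mul_sum,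
    Finset.sum_eq_single_of_mem Fin.revPerm (Finset.mem_univ _) fun τ _ hτ =>
      BBar_mul_of_permGL_mul_BBar_eq_zero hτ]

lemma BBar_mul_of_revPerm (n : ℕ) :
    BBar n * of _ _ (permGL (ZMod 2) Fin.revPerm) =
      of _ _ (permGL (ZMod 2) Fin.revPerm) *
        homSum (ZMod 2) (lowerTriangular n (ZMod 2)).subtype := by
  rw [BBar_eq_homSum, homSum, homSum, Finset.mul_sum, Finset.sum_mul]
  refine Fintype.sum_equiv
    ((MulAut.conj (permGL (ZMod 2) Fin.revPerm)⁻¹).toEquiv.subtypeEquiv fun g => ?_) _ _ fun u => ?_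
  · rw [← conj_revPerm_mem_lowerTriangular_iff, ← inv_inv (permGL (ZMod 2) Fin.revPerm)]
    rfl
  · rw [← map_mul, ← map_mul]
    congr 1
    simp [mul_assoc]

lemma isIdempotentElem_SteinbergElement (n : ℕ) : IsIdempotentElem (SteinbergElement n) := by
  set w := of (ZMod 2) _ (permGL (ZMod 2) Fin.revPerm)
  set L := homSum (ZMod 2) (lowerTriangular n (ZMod 2)).subtype
  calc SteinbergElement n * SteinbergElement n
      = SigmaBar n * (BBar n * (SigmaBar n * BBar n)) := by
        simp only [SteinbergElement, mul_assoc]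
    _ = SigmaBar n * (BBar n * w) * BBar n := by
        rw [BBar_mul_SigmaBar_mul_BBar]; simp only [w, mul_assoc]
    _ = SigmaBar n * w * (L * BBar n) := by rw [BBar_mul_of_revPerm]; simp only [w, L, mul_assoc]
    _ = SteinbergElement n := by
        rw [SigmaBar_mul_of_permGL, SigmaBar_mul_homSum_lowerTriangular_mul_BBar, SteinbergElement]

end Idempotence

section BlockEmbedding

variable {m : ℕ}

/-- The embedding `glEmbed (m + 1)`, with its source indexed by `m` instead of `m + 1 - 1`. -/
noncomputable def blockEmbed (hm : 2 ≤ m + 1) : GL (Fin m) (ZMod 2) →* GL (Fin (m + 1)) (ZMod 2) :=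
  glEmbed (m + 1) hm

lemma blockEmbed_castSucc_castSucc (hm : 2 ≤ m + 1) (g : GL (Fin m) (ZMod 2)) (i j : Fin m) :
    blockEmbed hm g i.castSucc j.castSucc = g i j := by
  change Matrix.reindex finSumFinEquiv finSumFinEquiv (Matrix.fromBlocks g.1 0 0 1) _ _ = _
  simp

lemma blockEmbed_castSucc_last (hm : 2 ≤ m + 1) (g : GL (Fin m) (ZMod 2)) (i : Fin m) :
    blockEmbed hm g i.castSucc (Fin.last m) = 0 := by
  change Matrix.reindex finSumFinEquiv finSumFinEquiv (Matrix.fromBlocks g.1 0 0 1) _ _ = _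
  simp

lemma blockEmbed_last_castSucc (hm : 2 ≤ m + 1) (g : GL (Fin m) (ZMod 2)) (j : Fin m) :
    blockEmbed hm g (Fin.last m) j.castSucc = 0 := by
  change Matrix.reindex finSumFinEquiv finSumFinEquiv (Matrix.fromBlocks g.1 0 0 1) _ _ = _
  simp

lemma blockEmbed_last_last (hm : 2 ≤ m + 1) (g : GL (Fin m) (ZMod 2)) :
    blockEmbed hm g (Fin.last m) (Fin.last m) = 1 := by
  change Matrix.reindex finSumFinEquiv finSumFinEquiv (Matrix.fromBlocks g.1 0 0 1) _ _ = _
  simp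

lemma blockEmbed_injective (hm : 2 ≤ m + 1) : Function.Injective (blockEmbed hm) := by
  intro g h hgh
  refine Units.ext (Matrix.ext fun i j => ?_)
  rw [← blockEmbed_castSucc_castSucc hm g, hgh, blockEmbed_castSucc_castSucc]

/-- The permutation of `m + 1` letters extending `τ` and fixing the last letter. -/
def permFixLast (τ : Equiv.Perm (Fin m)) : Equiv.Perm (Fin (m + 1)) :=
  finSuccEquivLast.symm.permCongr τ.optionCongr

/-- The permutation sending the last letter to `p` and increasing on the other letters. The inverses
of these represent the right cosets of `S_m` in `S_{m+1}`. -/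
def moveLast (p : Fin (m + 1)) : Equiv.Perm (Fin (m + 1)) :=
  finSuccEquivLast.trans (finSuccEquiv' p).symm

lemma permFixLast_castSucc (τ : Equiv.Perm (Fin m)) (i : Fin m) :
    permFixLast τ i.castSucc = (τ i).castSucc := by
  simp [permFixLast]

lemma permFixLast_last (τ : Equiv.Perm (Fin m)) : permFixLast τ (Fin.last m) = Fin.last m := by
  simp [permFixLast]

lemma permFixLast_injective : Function.Injective (permFixLast (m := m)) :=
  finSuccEquivLast.symm.permCongr.injective.comp Equiv.optionCongr_injective

lemma moveLast_castSucc (p : Fin (m + 1)) (i : Fin m) : moveLast p i.castSucc = p.succAbove i := by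
  simp [moveLast]

lemma moveLast_last (p : Fin (m + 1)) : moveLast p (Fin.last m) = p := by
  simp [moveLast]

lemma bijective_permFixLast_mul_moveLast_inv (m : ℕ) :
    Function.Bijective fun x : Equiv.Perm (Fin m) × Fin (m + 1) =>
      permFixLast x.1 * (moveLast x.2)⁻¹ := by
  refine (Fintype.bijective_iff_injective_and_card _).2 ⟨?_, ?_⟩
  · rintro ⟨τ, p⟩ ⟨τ', p'⟩ heq
    replace heq : permFixLast τ * (moveLast p)⁻¹ = permFixLast τ' * (moveLast p')⁻¹ := heq
    have apply_inv_last (τ : Equiv.Perm (Fin m)) (p : Fin (m + 1)) :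
        (permFixLast τ * (moveLast p)⁻¹)⁻¹ (Fin.last m) = p := by
      rw [mul_inv_rev, inv_inv, Equiv.Perm.mul_apply,
        Equiv.Perm.inv_eq_iff_eq.2 (permFixLast_last τ).symm, moveLast_last]
    obtain rfl : p = p' := by rw [← apply_inv_last τ p, heq, apply_inv_last]
    rw [permFixLast_injective (mul_right_cancel heq)]
  · rw [Fintype.card_prod, Fintype.card_perm, Fintype.card_perm, Fintype.card_fin, Fintype.card_fin,
      Nat.factorial_succ, mul_comm]

lemma blockEmbed_permGL (hm : 2 ≤ m + 1) (τ : Equiv.Perm (Fin m)) :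
    blockEmbed hm (permGL (ZMod 2) τ) = permGL (ZMod 2) (permFixLast τ) := by
  refine Units.ext (Matrix.ext fun i j => ?_)
  rw [permGL_apply]
  induction i using Fin.lastCases <;> induction j using Fin.lastCases <;>
    simp [blockEmbed_castSucc_castSucc, blockEmbed_castSucc_last, blockEmbed_last_castSucc,
      blockEmbed_last_last, permFixLast_castSucc, permFixLast_last, permGL_apply,
      Fin.castSucc_ne_last, (Fin.castSucc_ne_last _).symm]

lemma conj_moveLast_blockEmbed_mem_upperTriangular (hm : 2 ≤ m + 1) (p : Fin (m + 1))
    {u : GL (Fin m) (ZMod 2)} (hu : u ∈ upperTriangular m (ZMod 2)) :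
    permGL (ZMod 2) (moveLast p) * blockEmbed hm u * permGL (ZMod 2) (moveLast p)⁻¹ ∈
      upperTriangular (m + 1) (ZMod 2) := by
  rw [mem_upperTriangular]
  intro i j hji
  rw [mul_permGL_apply, permGL_mul_apply]
  obtain ⟨i, rfl⟩ := (moveLast p).surjective i
  obtain ⟨j, rfl⟩ := (moveLast p).surjective j
  rw [Equiv.Perm.inv_def, Equiv.symm_apply_apply, Equiv.symm_apply_apply]
  induction i using Fin.lastCases with
  | last =>
    induction j using Fin.lastCases with
    | last => exact absurd hji (lt_irrefl _)
    | cast j => exact blockEmbed_last_castSucc hm u j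
  | cast i =>
    induction j using Fin.lastCases with
    | last => exact blockEmbed_castSucc_last hm u i
    | cast j =>
      rw [moveLast_castSucc, moveLast_castSucc, Fin.succAbove_lt_succAbove_iff] at hji
      rw [blockEmbed_castSucc_castSucc, hu hji]

lemma SigmaBar_succ (hm : 2 ≤ m + 1) :
    SigmaBar (m + 1) = mapDomainAlgHom (ZMod 2) (ZMod 2) (blockEmbed hm) (SigmaBar m) *
      ∑ p, of _ _ (permGL (ZMod 2) (moveLast p)⁻¹) := by
  rw [SigmaBar_eq_homSum, SigmaBar_eq_homSum, mapDomainAlgHom_homSum, homSum, homSum,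
    Finset.sum_mul_sum, ← Fintype.sum_prod_type',
    ← (bijective_permFixLast_mul_moveLast_inv m).sum_comp]
  simp only [MonoidHom.comp_apply, blockEmbed_permGL, map_mul]

lemma exists_of_permGL_moveLast_inv_mul_BBar_eq (hm : 2 ≤ m + 1) (p : Fin (m + 1)) :
    ∃ y, of _ _ (permGL (ZMod 2) (moveLast p)⁻¹) * BBar (m + 1) =
      mapDomainAlgHom (ZMod 2) (ZMod 2) (blockEmbed hm) (BBar m) * y := by
  rw [BBar_eq_homSum m, mapDomainAlgHom_homSum]
  have hinj : Function.Injective ((blockEmbed hm).comp (upperTriangular m (ZMod 2)).subtype) :=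
    (blockEmbed_injective hm).comp Subtype.val_injective
  refine exists_eq_homSum_mul hinj fun u => ?_
  nth_rw 2 [← of_mul_BBar (conj_moveLast_blockEmbed_mem_upperTriangular hm p u.2)]
  simp only [← mul_assoc, ← map_mul, inv_mul_cancel, one_mul, map_one]
  rfl

lemma exists_SteinbergElement_succ_eq (hm : 2 ≤ m + 1) :
    ∃ y, SteinbergElement (m + 1) =
      mapDomainAlgHom (ZMod 2) (ZMod 2) (blockEmbed hm) (SteinbergElement m) * y := by
  choose y hy using exists_of_permGL_moveLast_inv_mul_BBar_eq hm
  refine ⟨∑ p, y p, ?_⟩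
  rw [SteinbergElement, SteinbergElement, SigmaBar_succ hm, map_mul, mul_assoc, mul_assoc,
    Finset.sum_mul, Finset.sum_congr rfl fun p _ => hy p, ← Finset.mul_sum]

end BlockEmbedding

/-- The absorption identity `φ(e_{n-1}) * e_n = e_n`, where `φ` is the algebra map of
group algebras induced by the block-diagonal embedding `g ↦ g ⊕ 1`. -/
theorem steinberg_absorption (n : ℕ) (hn : 2 ≤ n) :
    MonoidAlgebra.mapDomainAlgHom (ZMod 2) (ZMod 2) (glEmbed n hn)
        (SteinbergElement (n - 1)) * SteinbergElement n = SteinbergElement n := by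
  obtain ⟨m, rfl⟩ : ∃ m, n = m + 1 := ⟨n - 1, by omega⟩
  obtain ⟨y, hy⟩ := exists_SteinbergElement_succ_eq hn
  have hidem := (isIdempotentElem_SteinbergElement m).map
    (mapDomainAlgHom (ZMod 2) (ZMod 2) (blockEmbed hn))
  change mapDomainAlgHom (ZMod 2) (ZMod 2) (blockEmbed hn) (SteinbergElement m) * _ = _
  rw [hy, ← mul_assoc, hidem.eq]
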